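/- Let N ≥ 1, let ξ_1, ..., ξ_N be real numbers, and let I be a bounded interval of positive length. Then there exists a point x_0 ∈ I such that for every choice of complex coefficients c_1, ..., c_N, the function v(x) = ∑_{j=1}^N c_j e^{i ξ_j x} satisfies |v(x_0)| ≤ N^{1/2} |I|^{−1/2} ‖v‖_{L²(I)}. -/

import Mathlib

open MeasureTheory Complex Set
open scoped ENNReal NNReal

/-!
The span of the `N` exponentials in `L²(I)` has an orthonormal basis `u₁, …, u_d` with `d ≤ N`.
Since `∫_I ∑ₖ |uₖ|² = d`, some point `x₀` of `I` has `∑ₖ |uₖ(x₀)|² ≤ d / |I|`. Expanding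
`v = ∑ₖ ⟨uₖ, v⟩ uₖ` and applying Cauchy–Schwarz and Bessel's inequality gives
`|v(x₀)|² ≤ ‖v‖² ∑ₖ |uₖ(x₀)|² ≤ (N / |I|) ‖v‖²`.

The `uₖ` are only defined almost everywhere, but the expansion of every `v` at `x₀` follows from
those of the `N` generators, so `x₀` has to avoid a single null set, independent of `v`. The argument
therefore works for any `N` square-integrable functions on a finite measure space: this is
`exists_norm_sum_le`, of which the theorem is the case of exponentials on an interval.
-/

/-- The integral of `∑ₖ |uₖ|²`, for an orthonormal family in `L²`, is the size of the family. -/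
lemma integral_sum_norm_sq {α ι : Type*} [MeasurableSpace α] {μ : Measure α} [Fintype ι]
    {u : ι → Lp ℂ 2 μ} (hu : Orthonormal ℂ u) :
    Integrable (fun x => ∑ k, ‖u k x‖ ^ 2) μ ∧ ∫ x, ∑ k, ‖u k x‖ ^ 2 ∂μ = Fintype.card ι := by
  have hint : ∀ k, Integrable (fun x => ‖u k x‖ ^ 2) μ := fun k =>
    (memLp_two_iff_integrable_sq_norm (Lp.aestronglyMeasurable _)).1 (Lp.memLp (u k))
  refine ⟨integrable_finsetSum _ fun k _ => hint k, ?_⟩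
  rw [integral_finsetSum _ fun k _ => hint k]
  have h1 : ∀ k, ∫ x, ‖u k x‖ ^ 2 ∂μ = 1 := by
    intro k
    have h : inner ℂ (u k) (u k) = (1 : ℂ) := by
      rw [inner_self_eq_norm_sq_to_K, hu.1 k]; simp
    rw [L2.inner_def] at h
    simp_rw [inner_self_eq_norm_sq_to_K] at h
    have h' : ∫ x, ((‖u k x‖ ^ 2 : ℝ) : ℂ) ∂μ = 1 := by
      rw [← h]; congr 1; ext x; push_cast; rfl
    rw [integral_complex_ofReal] at h'
    exact_mod_cast h'
  simp [h1]

/-- For finitely many square-integrable functions on a finite measure space there is a point,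
which may be taken in any prescribed conull set, at which every linear combination is controlled
by its `L²` norm. -/
lemma exists_norm_sum_le {α : Type*} [MeasurableSpace α] (μ : Measure α) [IsFiniteMeasure μ]
    (hμ : μ ≠ 0) {N : ℕ} (f : Fin N → α → ℂ) (hf : ∀ j, MemLp (f j) 2 μ) {p : α → Prop}
    (hp : ∀ᵐ x ∂μ, p x) :
    ∃ x, p x ∧ ∀ c : Fin N → ℂ, ‖∑ j, c j * f j x‖ ≤
      √(N / μ.real univ) * (eLpNorm (fun y => ∑ j, c j * f j y) 2 μ).toReal := by
  classical
  set F : Fin N → Lp ℂ 2 μ := fun j => (hf j).toLp (f j) with hF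
  set V : Submodule ℂ (Lp ℂ 2 μ) := Submodule.span ℂ (range F) with hV
  have : FiniteDimensional ℂ V := FiniteDimensional.span_of_finite ℂ (finite_range F)
  have hd : Module.finrank ℂ V ≤ N := by
    simpa [Set.finrank] using finrank_range_le_card (R := ℂ) F
  set B := stdOrthonormalBasis ℂ V with hB
  set u : Fin (Module.finrank ℂ V) → Lp ℂ 2 μ := fun k => (B k : Lp ℂ 2 μ) with hu
  have hon : Orthonormal ℂ u := B.orthonormal.comp_linearIsometry V.subtypeₗᵢ
  have hexp : ∀ j, F j = ∑ k, inner ℂ (u k) (F j) • u k := by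
    intro j
    have h := congrArg (Subtype.val) (B.sum_repr' ⟨F j, Submodule.subset_span ⟨j, rfl⟩⟩)
    simpa using h.symm
  have hae : ∀ᵐ x ∂μ, ∀ j, f j x = ∑ k, inner ℂ (u k) (F j) * u k x := by
    rw [ae_all_iff]
    intro j
    have h1 := Lp.coeFn_fun_finsetSum Finset.univ fun k => inner ℂ (u k) (F j) • u k
    have h2 : ∀ᵐ x ∂μ, ∀ k, (inner ℂ (u k) (F j) • u k : Lp ℂ 2 μ) x
        = inner ℂ (u k) (F j) * u k x := by
      rw [ae_all_iff]
      intro k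
      filter_upwards [Lp.coeFn_smul (inner ℂ (u k) (F j)) (u k)] with x hx
      simpa using hx
    rw [← hexp j] at h1
    filter_upwards [(hf j).coeFn_toLp, h1, h2] with x hx h1 h2
    rw [← hx]
    exact h1.trans (Finset.sum_congr rfl fun k _ => h2 k)
  obtain ⟨hKi, hK⟩ := integral_sum_norm_sq hon
  obtain ⟨x, hxn, hx⟩ := exists_notMem_null_le_average hμ hKi (ae_iff.1 (hp.and hae))
  obtain ⟨hpx, hfx⟩ := not_not.1 hxn
  refine ⟨x, hpx, fun c => ?_⟩
  have hm : 0 < μ.real univ :=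
    ENNReal.toReal_pos (Measure.measure_univ_ne_zero.2 hμ) (measure_ne_top μ univ)
  have hKx : ∑ k, ‖u k x‖ ^ 2 ≤ N / μ.real univ := by
    refine hx.trans ?_
    rw [average_eq, hK, smul_eq_mul, inv_mul_eq_div, Fintype.card_fin]
    gcongr
  set v : Lp ℂ 2 μ := ∑ j, c j • F j with hv
  have hnorm : (eLpNorm (fun y => ∑ j, c j * f j y) 2 μ).toReal = ‖v‖ := by
    rw [Lp.norm_def]
    congr 1
    refine eLpNorm_congr_ae ?_
    have h1 := Lp.coeFn_fun_finsetSum Finset.univ fun j => c j • F j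
    have h2 : ∀ᵐ x ∂μ, ∀ j, (c j • F j : Lp ℂ 2 μ) x = c j * f j x := by
      rw [ae_all_iff]
      intro j
      filter_upwards [Lp.coeFn_smul (c j) (F j), (hf j).coeFn_toLp] with x hx hx'
      rw [hx, Pi.smul_apply, hx', smul_eq_mul]
    filter_upwards [h1, h2] with x h1 h2
    rw [h1]
    exact Finset.sum_congr rfl fun j _ => (h2 j).symm
  have hvx : ∑ j, c j * f j x = ∑ k, inner ℂ (u k) v * u k x := by
    simp_rw [hfx, hv, inner_sum, inner_smul_right, Finset.sum_mul, Finset.mul_sum]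
    rw [Finset.sum_comm]
    simp_rw [mul_assoc]
  rw [hnorm, hvx]
  calc ‖∑ k, inner ℂ (u k) v * u k x‖
      ≤ ∑ k, ‖inner ℂ (u k) v‖ * ‖u k x‖ := by
        simpa only [norm_mul] using norm_sum_le Finset.univ fun k => inner ℂ (u k) v * u k x
    _ ≤ √(∑ k, ‖inner ℂ (u k) v‖ ^ 2) * √(∑ k, ‖u k x‖ ^ 2) :=
        Real.sum_mul_le_sqrt_mul_sqrt _ _ _
    _ ≤ √(‖v‖ ^ 2) * √(N / μ.real univ) := by
        gcongr
        exact hon.sum_inner_products_le v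
    _ = _ := by rw [Real.sqrt_sq (norm_nonneg _), mul_comm]

/-- There is a point `x₀ ∈ I` such that every exponential polynomial
`v(x) = ∑_{j=1}^N c_j e^{i ξ_j x}` satisfies `|v(x₀)| ≤ N^{1/2} |I|^{-1/2} ‖v‖_{L²(I)}`. -/
theorem exists_good_point (N : ℕ) (hN : 1 ≤ N) (ξ : Fin N → ℝ) (a b : ℝ) (hab : a < b) :
    ∃ x₀ ∈ Set.Icc a b, ∀ c : Fin N → ℂ,
      (‖∑ j, c j * Complex.exp (Complex.I * (ξ j : ℂ) * (x₀ : ℂ))‖₊ : ℝ≥0∞)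
        ≤ (N : ℝ≥0∞) ^ (1/2 : ℝ) * ENNReal.ofReal (b - a) ^ (-(1/2) : ℝ) *
          eLpNorm (fun y : ℝ => ∑ j, c j * Complex.exp (Complex.I * (ξ j : ℂ) * (y : ℂ))) 2
            (volume.restrict (Set.Icc a b)) := by
  have hba : 0 < b - a := sub_pos.2 hab
  have hμ : volume.restrict (Icc a b) ≠ 0 := by
    rw [Ne, Measure.restrict_eq_zero, Real.volume_Icc]
    simpa using hab
  have hf : ∀ j, MemLp (fun y : ℝ => Complex.exp (Complex.I * (ξ j : ℂ) * (y : ℂ))) 2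
      (volume.restrict (Icc a b)) := fun j =>
    MemLp.of_bound (Continuous.aestronglyMeasurable (by fun_prop)) 1 <|
      Filter.Eventually.of_forall fun y => by simp [Complex.norm_exp]
  obtain ⟨x, hx, h⟩ := exists_norm_sum_le _ hμ _ hf (ae_restrict_mem measurableSet_Icc)
  refine ⟨x, hx, fun c => ?_⟩
  have hfin : eLpNorm (fun y : ℝ => ∑ j, c j * Complex.exp (Complex.I * (ξ j : ℂ) * (y : ℂ))) 2
      (volume.restrict (Set.Icc a b)) ≠ ∞ :=
    (memLp_finsetSum Finset.univ fun j _ => (hf j).const_mul (c j)).eLpNorm_ne_top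
  have hreal : (volume.restrict (Icc a b)).real univ = b - a := by
    simp [hab.le]
  have hc : ENNReal.ofReal √(N / (b - a))
      = (N : ℝ≥0∞) ^ (1/2 : ℝ) * ENNReal.ofReal (b - a) ^ (-(1/2) : ℝ) := by
    rw [← ENNReal.ofReal_natCast, ENNReal.ofReal_rpow_of_nonneg (by positivity) (by norm_num),
      ENNReal.ofReal_rpow_of_pos hba, ← ENNReal.ofReal_mul (by positivity),
      Real.sqrt_div (by positivity), Real.rpow_neg hba.le, ← Real.sqrt_eq_rpow,
      ← Real.sqrt_eq_rpow, div_eq_mul_inv]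
  have h := ENNReal.ofReal_le_ofReal (h c)
  rwa [hreal, ENNReal.ofReal_mul (Real.sqrt_nonneg _), ENNReal.ofReal_toReal hfin, hc,
    ofReal_norm] at h
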